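/- arXiv:1111.2901 — 3 statements merged into one kernel-verified Lean document; each statement's English description precedes it below -/
import Mathlib

section
/- Let A be a left self-injective semiprimary ring and e an idempotent of A such that Ae is an indecomposable left A-module. Then the socle of the left A-module Ae is simple. -/
universe u

open Cardinal

/-- A ring is *semiprimary* if its Jacobson radical `J` is nilpotent
(`J ^ n = 0`, expressed elementwise: every product of `n` elements of `J` vanishes)
and the quotient ring `A / J` is a semisimple ring. -/
def IsSemiprimary (A : Type*) [Ring A] : Prop :=
  IsSemisimpleRing (RingCon.Quotient (⊥ : TwoSidedIdeal A).jacobson.ringCon) ∧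
  ∃ n : ℕ, 0 < n ∧ ∀ f : Fin n → A,
    (∀ i, f i ∈ Ideal.jacobson (⊥ : Ideal A)) → (List.ofFn f).prod = 0

/-- A ring is *quasi-Frobenius* if it is left self-injective and left artinian. -/
def IsQuasiFrobenius (A : Type*) [Ring A] : Prop :=
  Module.Injective A A ∧ IsArtinianRing A

/-- The socle of a module: the sum of all its simple submodules. -/
def socle (R M : Type*) [Ring R] [AddCommGroup M] [Module R M] : Submodule R M :=
  sSup {N : Submodule R M | IsSimpleModule R N}

/-- A module is *indecomposable* if it is nonzero and is not the direct sum of two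
nonzero submodules. -/
def IsIndecomposableModule (R M : Type*) [Ring R] [AddCommGroup M] [Module R M] : Prop :=
  Nontrivial M ∧ ∀ N N' : Submodule R M, IsCompl N N' → N = ⊥ ∨ N' = ⊥

/-!
In an injective module `M`, two disjoint submodules `N` and `T`, each maximal among the submodules
disjoint from the other, are complementary: the inclusion of `T` extends along the embedding
`T → M ⧸ N` to an endomorphism of `M` that kills `N` and fixes `T`, and the two maximalities force
its kernel to be `N` and its range to be `T`. By Zorn's lemma any two disjoint submodules lie in
such a pair, so an indecomposable injective module is uniform and has at most one simple submodule.
Over a semiprimary ring it has at least one. Finally `Ae` is injective, being a retract of `A`.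
-/

universe v w

section Lattice

variable {α : Type*} [CompleteLattice α] [IsCompactlyGenerated α] {a b : α}

theorem exists_le_maximal_disjoint (h : Disjoint a b) :
    ∃ c, a ≤ c ∧ Maximal (Disjoint · b) c :=
  zorn_le_nonempty₀ {c | Disjoint c b}
    (fun s hs hchain _ _ ↦
      ⟨sSup s, hchain.directedOn.disjoint_sSup_left.mpr fun _ hc ↦ hs hc, fun _ ↦ le_sSup⟩) a h

theorem exists_le_le_maximal_disjoint (h : Disjoint a b) :
    ∃ c d, a ≤ c ∧ b ≤ d ∧ Maximal (Disjoint · d) c ∧ Maximal (Disjoint · c) d := by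
  obtain ⟨c, hac, hc⟩ := exists_le_maximal_disjoint h
  obtain ⟨d, hbd, hd⟩ := exists_le_maximal_disjoint hc.prop.symm
  exact ⟨c, d, hac, hbd, ⟨hd.prop.symm, fun _ hx ↦ hc.le_of_ge (hx.mono_right hbd)⟩, hd⟩

end Lattice

section Injective

variable {R : Type*} [Ring R]

theorem injective_of_comp_eq_id {M : Type v} {N : Type w} [AddCommGroup M] [Module R M]
    [AddCommGroup N] [Module R N] [Small.{w} R] [Module.Injective R N] {i : M →ₗ[R] N}
    {r : N →ₗ[R] M} (hri : r ∘ₗ i = LinearMap.id) : Module.Injective R M where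
  out X Y _ _ _ _ f hf g := by
    obtain ⟨h, hh⟩ := Module.Injective.extension_property R N X Y f hf (i ∘ₗ g)
    refine ⟨r ∘ₗ h, LinearMap.congr_fun (f := (r ∘ₗ h) ∘ₗ f) ?_⟩
    rw [LinearMap.comp_assoc, hh, ← LinearMap.comp_assoc, hri, LinearMap.id_comp]

theorem injective_span_singleton_of_isIdempotentElem [Module.Injective R R] {e : R}
    (he : IsIdempotentElem e) : Module.Injective R (Submodule.span R {e}) := by
  refine injective_of_comp_eq_id (i := (Submodule.span R {e}).subtype)
    (r := LinearMap.toSpanSingleton R _ ⟨e, Submodule.mem_span_singleton_self e⟩) ?_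
  ext ⟨x, hx⟩
  obtain ⟨a, rfl⟩ := Submodule.mem_span_singleton.mp hx
  simp [mul_assoc, he.eq]

variable {M : Type v} [Small.{v} R] [AddCommGroup M] [Module R M] [Module.Injective R M]
  {N T : Submodule R M}

theorem exists_le_ker_forall_apply_eq_self_of_disjoint (h : Disjoint N T) :
    ∃ p : M →ₗ[R] M, N ≤ LinearMap.ker p ∧ ∀ t ∈ T, p t = t := by
  have hinj : Function.Injective (N.mkQ ∘ₗ T.subtype) := by
    rw [← LinearMap.ker_eq_bot, LinearMap.ker_comp, Submodule.ker_mkQ]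
    exact Submodule.disjoint_iff_comap_eq_bot.mp h.symm
  obtain ⟨q, hq⟩ := Module.Injective.extension_property R M T (M ⧸ N) _ hinj T.subtype
  exact ⟨q ∘ₗ N.mkQ, N.ker_mkQ.ge.trans (LinearMap.ker_le_ker_comp _ _),
    fun t ht ↦ LinearMap.congr_fun hq ⟨t, ht⟩⟩

theorem isCompl_of_maximal_disjoint (hN : Maximal (Disjoint · T) N)
    (hT : Maximal (Disjoint · N) T) : IsCompl N T := by
  obtain ⟨p, hNp, hTp⟩ := exists_le_ker_forall_apply_eq_self_of_disjoint hN.prop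
  have hcomap : N.comap p ≤ N := by
    refine hN.le_of_ge (Submodule.disjoint_def.mpr fun x hx hxT ↦ ?_) fun x hx ↦ ?_
    · rw [Submodule.mem_comap, hTp x hxT] at hx
      exact Submodule.disjoint_def.mp hN.prop x hx hxT
    · rw [Submodule.mem_comap, hNp hx]
      exact N.zero_mem
  have hrange : LinearMap.range p ≤ T := by
    refine hT.le_of_ge (Submodule.disjoint_def.mpr ?_) fun t ht ↦ ⟨t, hTp t ht⟩
    rintro _ ⟨x, rfl⟩ hx
    exact hNp (hcomap hx)
  have hker : LinearMap.ker p = N := ((Submodule.comap_mono bot_le).trans hcomap).antisymm hNp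
  have hproj : LinearMap.IsProj T p := ⟨fun x ↦ hrange ⟨x, rfl⟩, hTp⟩
  exact hker ▸ hproj.isCompl.symm

end Injective

section Semiprimary

theorem pow_le_of_forall_list_prod_mem {R : Type*} [Semiring R] {I K : Ideal R} {n : ℕ}
    (hn : n ≠ 0) (h : ∀ f : Fin n → R, (∀ i, f i ∈ I) → (List.ofFn f).prod ∈ K) : I ^ n ≤ K := by
  rw [← Submodule.toAddSubmonoid_le, Submodule.pow_toAddSubmonoid _ hn,
    ← AddSubmonoid.closure_eq I.toAddSubmonoid, AddSubmonoid.closure_pow, AddSubmonoid.closure_le]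
  intro x hx
  obtain ⟨f, rfl⟩ := Set.mem_pow.mp hx
  exact h _ fun i ↦ (f i).2

variable {R : Type*} [Ring R]

theorem ringCon_jacobson_bot :
    (⊥ : TwoSidedIdeal R).jacobson.ringCon = Ideal.Quotient.ringCon (Ring.jacobson R) := by
  ext x y
  rw [TwoSidedIdeal.rel_iff, TwoSidedIdeal.jacobson, Ideal.mem_toTwoSided,
    TwoSidedIdeal.bot_asIdeal, Ideal.jacobson_bot]
  exact (Submodule.quotientRel_def _).symm

theorem IsSemiprimary.isSemiprimaryRing (h : IsSemiprimary R) : IsSemiprimaryRing R where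
  isSemisimpleRing := by
    have hquot := h.1
    rwa [ringCon_jacobson_bot] at hquot
  isNilpotent := by
    obtain ⟨n, hn, hprod⟩ := h.2
    rw [← Ideal.jacobson_bot]
    exact ⟨n, le_bot_iff.mp (pow_le_of_forall_list_prod_mem hn.ne' hprod)⟩

theorem exists_isSimpleModule_of_injective {N M : Type*} [AddCommGroup N] [Module R N]
    [AddCommGroup M] [Module R M] (f : N →ₗ[R] M) (hf : Function.Injective f)
    (h : ∃ S : Submodule R N, IsSimpleModule R S) : ∃ S : Submodule R M, IsSimpleModule R S :=
  let ⟨S, _⟩ := h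
  ⟨S.map f, IsSimpleModule.congr (S.equivMapOfInjective f hf).symm⟩

theorem exists_isSimpleModule_of_isSemiprimaryRing [IsSemiprimaryRing R] (M : Type*)
    [AddCommGroup M] [Module R M] [Nontrivial M] : ∃ S : Submodule R M, IsSimpleModule R S := by
  refine IsSemiprimaryRing.induction R R M
    (P := fun M _ _ _ ↦ Nontrivial M → ∃ S : Submodule R M, IsSimpleModule R S)
    (fun M _ _ _ _ _ _ _ ↦ IsSemisimpleModule.exists_simple_submodule R M)
    (fun M _ _ _ _ hsub hquot _ ↦ ?_) ‹_›
  rcases eq_or_ne (Ring.jacobson R • (⊤ : Submodule R M)) ⊥ with hbot | hne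
  · let f := Submodule.quotEquivOfEqBot _ hbot
    exact exists_isSimpleModule_of_injective f.toLinearMap f.injective (hquot f.toEquiv.nontrivial)
  · exact exists_isSimpleModule_of_injective _ (Submodule.subtype_injective _)
      (hsub (Submodule.nontrivial_iff_ne_bot.mpr hne))

end Semiprimary

/-- A *uniform* module: a nonzero module in which any two nonzero submodules intersect
nontrivially. It mediates between indecomposability, which it strengthens, and having at most one
simple submodule, which it implies. -/
def IsUniformModule (R M : Type*) [Ring R] [AddCommGroup M] [Module R M] : Prop :=
  Nontrivial M ∧ ∀ N N' : Submodule R M, Disjoint N N' → N = ⊥ ∨ N' = ⊥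

section Uniform

variable {R : Type*} {M : Type v} [Ring R] [AddCommGroup M] [Module R M]

theorem IsIndecomposableModule.isUniformModule [Small.{v} R] [Module.Injective R M]
    (hM : IsIndecomposableModule R M) : IsUniformModule R M := by
  refine ⟨hM.1, fun S T hST ↦ ?_⟩
  obtain ⟨N, N', hSN, hTN', hN, hN'⟩ := exists_le_le_maximal_disjoint hST
  exact (hM.2 N N' (isCompl_of_maximal_disjoint hN hN')).imp (eq_bot_mono hSN) (eq_bot_mono hTN')

theorem IsUniformModule.socle_eq (hM : IsUniformModule R M) (S : Submodule R M)
    [hS : IsSimpleModule R S] : socle R M = S := by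
  refine le_antisymm (sSup_le fun T hT ↦ ?_) (le_sSup hS)
  have hSatom : IsAtom S := isSimpleModule_iff_isAtom.mp hS
  have hTatom : IsAtom T := isSimpleModule_iff_isAtom.mp hT
  by_contra hTS
  have hdisj : Disjoint T S := hTatom.disjoint_of_ne hSatom fun h ↦ hTS h.le
  exact (hM.2 T S hdisj).elim hTatom.ne_bot hSatom.ne_bot

theorem IsUniformModule.isSimpleModule_socle [IsSemiprimaryRing R] (hM : IsUniformModule R M) :
    IsSimpleModule R (socle R M) := by
  have := hM.1
  obtain ⟨S, hS⟩ := exists_isSimpleModule_of_isSemiprimaryRing (R := R) M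
  rwa [hM.socle_eq S]

end Uniform

theorem socle_simple_of_indecomposable_projective_general {R : Type*} {M : Type v} [Ring R]
    [Small.{v} R] [AddCommGroup M] [Module R M] [Module.Injective R M] (hsp : IsSemiprimary R)
    (hind : IsIndecomposableModule R M) : IsSimpleModule R (socle R M) :=
  have := hsp.isSemiprimaryRing
  hind.isUniformModule.isSimpleModule_socle

/-- For a left self-injective semiprimary ring `A` and an idempotent `e` such that the left
`A`-module `Ae` is indecomposable, the socle of `Ae` is a simple module. -/
theorem socle_simple_of_indecomposable_projective
    (A : Type u) [Ring A] (hsp : IsSemiprimary A) (hinj : Module.Injective A A)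
    (e : A) (he : IsIdempotentElem e)
    (hind : IsIndecomposableModule A (Submodule.span A {e})) :
    IsSimpleModule A (socle A (Submodule.span A {e})) := by
  have := injective_span_singleton_of_isIdempotentElem he
  exact socle_simple_of_indecomposable_projective_general hsp hind
end

section
/- Let A be a left self-injective semiprimary ring with Jacobson radical J, and let Σ be the left socle of A. Then the right annihilator of Σ equals J, i.e. {a ∈ A : Σ·a = 0} = J, and A/J ≅ Hom_A(Σ, A) as right A-modules. -/
/-!
Let `M` be an injective module with essential socle. If an endomorphism `f` kills the socle, then
each `1 - g * f` is injective, because it is the identity on the socle; it therefore has a left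
inverse, by injectivity of `M`, and `f` lies in the radical of `Module.End R M`. Conversely, an `f`
that is nonzero on a simple submodule `S` is injective on `S`, so some `g` inverts it there, and
`1 - g * f` kills `S`, so `f` is not in the radical. For `M = A` the endomorphisms are the right
multiplications, which form the ring `Aᵐᵒᵖ`; quasi-regularity is left-right symmetric, so `A` and
`Aᵐᵒᵖ` have the same radical.

The left socle of a semiprimary ring is essential: if `N` is a nonzero submodule of any module and
`J` is the radical, the last nonzero term of `N ⊇ J N ⊇ J² N ⊇ ⋯` is killed by `J`, hence is a
module over the semisimple ring `A / J`.
-/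

universe u

open Cardinal

section Socle

variable {R M : Type*} [Ring R] [AddCommGroup M] [Module R M]

/-- A submodule is *essential* (or *large*) if it meets every nonzero submodule nontrivially. -/
def IsEssentialSubmodule (N : Submodule R M) : Prop :=
  ∀ P : Submodule R M, Disjoint P N → P = ⊥

lemma map_socle_le {N : Type*} [AddCommGroup N] [Module R N] (f : M →ₗ[R] N) :
    (socle R M).map f ≤ socle R N := by
  refine Submodule.map_le_iff_le_comap.2 <| sSup_le fun S (_ : IsSimpleModule R S) ↦ ?_
  rw [← Submodule.map_le_iff_le_comap, ← LinearMap.range_domRestrict]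
  obtain hinj | hzero := LinearMap.injective_or_eq_zero (f.domRestrict S)
  · exact le_sSup (IsSimpleModule.congr (LinearEquiv.ofInjective _ hinj).symm)
  · simp [hzero]

lemma le_socle_of_isSemisimpleModule (N : Submodule R M) [IsSemisimpleModule R N] :
    N ≤ socle R M := by
  have hN : socle R N = ⊤ := IsSemisimpleModule.sSup_simples_eq_top R N
  simpa [hN] using map_socle_le N.subtype

lemma le_socle_of_jacobson_smul_eq_bot [IsSemisimpleRing (R ⧸ Ring.jacobson R)]
    {N : Submodule R M} (hN : Ring.jacobson R • N = ⊥) : N ≤ socle R M := by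
  have torsion : Module.IsTorsionBySet R N (Ring.jacobson R : Set R) := fun x j ↦ by
    have : (j : R) • (x : M) ∈ Ring.jacobson R • N := Submodule.smul_mem_smul j.2 x.2
    rw [hN, Submodule.mem_bot] at this
    exact Subtype.ext this
  let _ := torsion.module
  have : IsSemisimpleModule R N := torsion.isSemisimpleModule_iff.1 inferInstance
  exact le_socle_of_isSemisimpleModule N

theorem isEssentialSubmodule_socle [IsSemiprimaryRing R] : IsEssentialSubmodule (socle R M) := by
  intro N hN
  obtain ⟨n, hn⟩ := IsSemiprimaryRing.isNilpotent (R := R)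
  have descend (k : ℕ) : Ring.jacobson R ^ k • N = ⊥ → N = ⊥ := by
    induction k with
    | zero => simp [Submodule.pow_zero]
    | succ k ih =>
      intro h
      rw [Ideal.IsTwoSided.pow_succ, Submodule.mul_smul] at h
      exact ih ((hN.mono_left Submodule.smul_le_right).eq_bot_of_le
        (le_socle_of_jacobson_smul_eq_bot h))
  exact descend n (by simp [hn])

end Socle

section Semiprimary

open scoped Pointwise

lemma ideal_pow_eq_span_pow {R : Type*} [Ring R] (I : Ideal R) [I.IsTwoSided] (n : ℕ) :
    I ^ n = Ideal.span ((I : Set R) ^ n) := by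
  have : (Ideal.span (I : Set R)).IsTwoSided := by rwa [Ideal.span_eq]
  induction n with
  | zero => simp [Submodule.pow_zero]
  | succ n ih =>
    rw [Ideal.IsTwoSided.pow_succ, pow_succ', ih, ← Ideal.span_mul_span', Ideal.span_eq]

theorem IsSemiprimary.isSemiprimaryRing_s13 {A : Type*} [Ring A] (h : IsSemiprimary A) :
    IsSemiprimaryRing A := by
  obtain ⟨hss, n, -, hn⟩ := h
  refine ⟨?_, n, ?_⟩
  · have hker : (⊥ : TwoSidedIdeal A).jacobson.ringCon ≤
        RingCon.ker (Ideal.Quotient.mk (Ring.jacobson A)) := by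
      intro x y hxy
      rw [TwoSidedIdeal.rel_iff, TwoSidedIdeal.mem_jacobson_iff] at hxy
      have : x - y ∈ Ring.jacobson A := by
        rw [← Ideal.jacobson_bot, Ideal.mem_jacobson_iff]
        simpa using hxy
      exact Ideal.Quotient.eq.2 this
    exact RingHom.isSemisimpleRing_of_surjective (RingCon.lift _ _ hker)
      (RingCon.lift_surjective_of_surjective hker Ideal.Quotient.mk_surjective)
  · rw [ideal_pow_eq_span_pow, Ideal.zero_eq_bot, Ideal.span_eq_bot]
    intro x hx
    obtain ⟨f, rfl⟩ := Set.mem_pow.1 hx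
    exact hn (fun i ↦ f i) fun i ↦ Ideal.jacobson_bot.ge (f i).2

end Semiprimary

section Jacobson

variable {R : Type*} [Ring R] {a : R}

lemma mem_jacobson_iff_exists_left_inv :
    a ∈ Ring.jacobson R ↔ ∀ x, ∃ c, c * (1 - x * a) = 1 := by
  rw [← Ideal.jacobson_bot, Ideal.mem_jacobson_iff, ← (Equiv.neg R).forall_congr_right]
  refine forall_congr' fun x ↦ exists_congr fun c ↦ ?_
  rw [Ideal.mem_bot, sub_eq_zero, Equiv.neg_apply, mul_sub, mul_one, ← mul_assoc, mul_neg, neg_mul,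
    neg_add_eq_sub]

lemma mem_jacobson_iff_isUnit : a ∈ Ring.jacobson R ↔ ∀ x, IsUnit (1 - x * a) := by
  rw [mem_jacobson_iff_exists_left_inv]
  refine ⟨fun h x ↦ ?_, fun h x ↦ (h x).exists_left_inv⟩
  obtain ⟨c, hc⟩ := h x
  obtain ⟨d, hd⟩ := h (-(c * x))
  have hdc : d * c = 1 := by
    have : c = 1 - -(c * x) * a := by rw [← hc]; noncomm_ring
    rwa [← this] at hd
  rw [left_inv_eq_right_inv hdc hc] at hdc
  exact isUnit_iff_exists.2 ⟨c, hdc, hc⟩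

lemma isUnit_one_sub_mul_comm (a b : R) : IsUnit (1 - a * b) ↔ IsUnit (1 - b * a) := by
  simpa [spectrum.mem_iff] using
    (spectrum.unit_mem_mul_comm (R := ℤ) (a := a) (b := b) (r := 1)).not

lemma op_mem_jacobson_iff : MulOpposite.op a ∈ Ring.jacobson Rᵐᵒᵖ ↔ a ∈ Ring.jacobson R := by
  simp_rw [mem_jacobson_iff_isUnit, MulOpposite.op_surjective.forall, ← MulOpposite.op_mul,
    ← MulOpposite.op_one, ← MulOpposite.op_sub, isUnit_op, isUnit_one_sub_mul_comm a]

lemma map_mem_jacobson_iff {S : Type*} [Ring S] (e : R ≃+* S) :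
    e a ∈ Ring.jacobson S ↔ a ∈ Ring.jacobson R := by
  simp_rw [mem_jacobson_iff_isUnit, e.surjective.forall, ← map_mul, ← map_one e, ← map_sub,
    MulEquiv.isUnit_map]

end Jacobson

section Injective

variable {R M : Type*} [Ring R] [AddCommGroup M] [Module R M] [Module.Injective R M]
  {f : Module.End R M}

lemma socle_le_ker_of_mem_jacobson_end (hf : f ∈ Ring.jacobson (Module.End R M)) :
    socle R M ≤ LinearMap.ker f := by
  refine sSup_le fun S (_ : IsSimpleModule R S) x hx ↦ ?_
  obtain hinj | hzero := LinearMap.injective_or_eq_zero (f ∘ₗ S.subtype)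
  · obtain ⟨g, hg⟩ := Module.Injective.out _ hinj S.subtype
    obtain ⟨c, hc⟩ := mem_jacobson_iff_exists_left_inv.1 hf g
    have hgf : g (f x) = x := hg ⟨x, hx⟩
    have hx0 : x = 0 := by simpa [hgf] using (LinearMap.congr_fun hc x).symm
    simp [hx0]
  · exact LinearMap.congr_fun hzero ⟨x, hx⟩

lemma mem_jacobson_end_of_socle_le_ker (hess : IsEssentialSubmodule (socle R M))
    (hf : socle R M ≤ LinearMap.ker f) : f ∈ Ring.jacobson (Module.End R M) := by
  refine mem_jacobson_iff_exists_left_inv.2 fun g ↦ ?_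
  have hdisj : Disjoint (LinearMap.ker (1 - g * f)) (socle R M) := by
    refine Submodule.disjoint_def.2 fun x hx hxs ↦ ?_
    have hfx : f x = 0 := hf hxs
    simpa [hfx] using hx
  have hinj : Function.Injective ⇑(1 - g * f) := LinearMap.ker_eq_bot.1 (hess _ hdisj)
  obtain ⟨c, hc⟩ := Module.Injective.out _ hinj LinearMap.id
  exact ⟨c, LinearMap.ext hc⟩

theorem mem_jacobson_end_iff_socle_le_ker (hess : IsEssentialSubmodule (socle R M)) :
    f ∈ Ring.jacobson (Module.End R M) ↔ socle R M ≤ LinearMap.ker f :=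
  ⟨socle_le_ker_of_mem_jacobson_end, mem_jacobson_end_of_socle_le_ker hess⟩

end Injective

section SelfInjective

variable {A : Type*} [Ring A]

theorem mem_jacobson_iff_socle_mul_eq_zero [Module.Injective A A]
    (hess : IsEssentialSubmodule (socle A A)) (a : A) :
    a ∈ Ring.jacobson A ↔ ∀ s ∈ socle A A, s * a = 0 := by
  rw [← op_mem_jacobson_iff, ← map_mem_jacobson_iff (RingEquiv.moduleEndSelf A),
    mem_jacobson_end_iff_socle_le_ker hess]
  rfl

/-- The map `A → Hom_A(I, A)` of right `A`-modules which sends `a` to right multiplication by `a`,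
restricted to the left ideal `I`. Right `A`-modules are encoded as `Aᵐᵒᵖ`-modules. -/
def mulRightRestrict (I : Ideal A) : A →ₗ[Aᵐᵒᵖ] (I →ₗ[A] A) where
  toFun a := LinearMap.toSpanSingleton A A a ∘ₗ I.subtype
  map_add' a b := by ext; simp [mul_add]
  map_smul' r a := by ext; simp [mul_assoc]

lemma mulRightRestrict_apply (I : Ideal A) (a : A) (s : I) : mulRightRestrict I a s = s * a :=
  rfl

lemma mulRightRestrict_eq_zero_iff {I : Ideal A} {a : A} :
    mulRightRestrict I a = 0 ↔ ∀ s ∈ I, s * a = 0 := by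
  simp [LinearMap.ext_iff, mulRightRestrict_apply]

lemma mulRightRestrict_surjective [Module.Injective A A] (I : Ideal A) :
    Function.Surjective (mulRightRestrict I) := by
  intro f
  obtain ⟨g, hg⟩ := Module.Baer.of_injective ‹_› I f
  refine ⟨g 1, LinearMap.ext fun s ↦ ?_⟩
  rw [mulRightRestrict_apply, ← smul_eq_mul, ← map_smul, smul_eq_mul, mul_one, hg s s.2]

end SelfInjective

theorem right_annihilator_socle_eq_jacobson_general
    (A : Type u) [Ring A] [Module.Injective A A] (hess : IsEssentialSubmodule (socle A A)) :
    (∀ a : A, (∀ s ∈ socle A A, s * a = 0) ↔ a ∈ Ideal.jacobson (⊥ : Ideal A)) ∧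
    ∃ φ : A →ₗ[Aᵐᵒᵖ] ((socle A A) →ₗ[A] A), Function.Surjective φ ∧
      ∀ a : A, φ a = 0 ↔ a ∈ Ideal.jacobson (⊥ : Ideal A) := by
  have annihilates_iff (a : A) :
      (∀ s ∈ socle A A, s * a = 0) ↔ a ∈ Ideal.jacobson (⊥ : Ideal A) := by
    rw [Ideal.jacobson_bot, mem_jacobson_iff_socle_mul_eq_zero hess]
  exact ⟨annihilates_iff, mulRightRestrict (socle A A), mulRightRestrict_surjective _,
    fun a ↦ mulRightRestrict_eq_zero_iff.trans (annihilates_iff a)⟩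

/-- For a left self-injective semiprimary ring `A` with Jacobson radical `J` and left socle
`Σ`, the right annihilator of `Σ` is exactly `J`, and `A / J ≅ Hom_A(Σ, A)` as right
`A`-modules (expressed by a right `A`-linear surjection `A → Hom_A(Σ, A)` whose kernel is
exactly `J`, i.e. an exact sequence `0 → J → A → Hom_A(Σ, A) → 0`). -/
theorem right_annihilator_socle_eq_jacobson
    (A : Type u) [Ring A] (hsp : IsSemiprimary A) (hinj : Module.Injective A A) :
    (∀ a : A, (∀ s ∈ socle A A, s * a = 0) ↔ a ∈ Ideal.jacobson (⊥ : Ideal A)) ∧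
    ∃ φ : A →ₗ[Aᵐᵒᵖ] ((socle A A) →ₗ[A] A), Function.Surjective φ ∧
      ∀ a : A, φ a = 0 ↔ a ∈ Ideal.jacobson (⊥ : Ideal A) := by
  have := hsp.isSemiprimaryRing_s13
  exact right_annihilator_socle_eq_jacobson_general A isEssentialSubmodule_socle
end

section
/- Let A be a left self-injective semiprimary algebra over a field K, and let 0 = Σ₋₁ ⊂ Σ₀ ⊂ Σ₁ ⊂ ⋯ ⊂ Σ_{n-1} = A be its left Loewy series. Then dim_K(A) = Σ_k dim_K((Σ_k/Σ_{k-1})*), where for a left A-module M, M* = Hom_A(M, A). -/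
universe u v

open Cardinal

/-- The (left) Loewy series of `A`: `loewySeries A 0 = 0` and `loewySeries A (k+1)` is the
preimage in `A` of the socle of `A ⧸ loewySeries A k`, so the successive quotients are the
socles of the corresponding quotients of `A`.  (Here `Σₖ = loewySeries A (k+1)`, and
`Σₖ/Σₖ₋₁ ≅ socle (A ⧸ loewySeries A k)`.) -/
def loewySeries (A : Type u) [Ring A] : ℕ → Submodule A A
  | 0 => ⊥
  | k + 1 => (socle A (A ⧸ loewySeries A k)).comap (loewySeries A k).mkQ

/-!
An injective module `E` makes `Hom_R(-, E)` exact, so `M ↦ dim Hom_R(M, E)` is additive on short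
exact sequences and is therefore computed by the successive quotients of any finite filtration
starting at `0`. For the Loewy series of `A` the total is `dim Hom_A(A, E) = dim E`.
-/

universe w

section HomIntoInjective

variable {R : Type*} [Ring R] {K : Type*} [Ring K]
variable {E : Type v} [AddCommGroup E] [Module R E] [Module K E] [SMulCommClass R K E]

section Exactness

variable (K E) {M N P : Type*} [AddCommGroup M] [Module R M] [AddCommGroup N] [Module R N]
  [AddCommGroup P] [Module R P]

theorem lcomp_surjective_of_injective [Small.{v} R] [Module.Injective R E] {f : M →ₗ[R] N}
    (hf : Function.Injective f) : Function.Surjective (LinearMap.lcomp K E f) :=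
  fun φ ↦ Module.Injective.extension_property R E M N f hf φ

-- `LinearMap.exact_lcomp_of_exact_of_surjective` is stated only for commutative `R` and `K = R`.
theorem exact_lcomp_of_exact_of_surjective {f : M →ₗ[R] N} {g : N →ₗ[R] P}
    (hfg : Function.Exact f g) (hg : Function.Surjective g) :
    Function.Exact (LinearMap.lcomp K E g) (LinearMap.lcomp K E f) := by
  refine LinearMap.exact_of_comp_eq_zero_of_ker_le_range ?_ fun φ hφ ↦ ?_
  · ext ψ x
    simp [hfg.apply_apply_eq_zero]
  · have hrange : LinearMap.range f ≤ LinearMap.ker φ := LinearMap.range_le_ker_iff.mpr hφ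
    refine ⟨(LinearMap.range f).liftQ φ hrange ∘ₗ (hfg.linearEquivOfSurjective hg).symm, ?_⟩
    ext x
    simp

end Exactness

theorem rank_linearMap_eq_add_of_exact {M N P : Type w} [AddCommGroup M] [Module R M]
    [AddCommGroup N] [Module R N] [AddCommGroup P] [Module R P] [Small.{v} R]
    [Module.Injective R E] [HasRankNullity.{max v w} K] {f : M →ₗ[R] N} {g : N →ₗ[R] P}
    (hf : Function.Injective f) (hfg : Function.Exact f g) (hg : Function.Surjective g) :
    Module.rank K (N →ₗ[R] E) = Module.rank K (M →ₗ[R] E) + Module.rank K (P →ₗ[R] E) := by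
  rw [LinearMap.rank_eq_of_surjective (lcomp_surjective_of_injective K E hf),
    (exact_lcomp_of_exact_of_surjective K E hfg hg).linearMap_ker_eq,
    (LinearEquiv.ofInjective _ (LinearMap.lcomp_injective_of_surjective g hg)).rank_eq]

theorem rank_linearMap_eq_add_sum_of_exact {F P : ℕ → Type w} [∀ k, AddCommGroup (F k)]
    [∀ k, Module R (F k)] [∀ k, AddCommGroup (P k)] [∀ k, Module R (P k)] [Small.{v} R]
    [Module.Injective R E] [HasRankNullity.{max v w} K]
    (f : ∀ k, F k →ₗ[R] F (k + 1)) (g : ∀ k, F (k + 1) →ₗ[R] P k)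
    (hf : ∀ k, Function.Injective (f k)) (hfg : ∀ k, Function.Exact (f k) (g k))
    (hg : ∀ k, Function.Surjective (g k)) (n : ℕ) :
    Module.rank K (F n →ₗ[R] E) =
      Module.rank K (F 0 →ₗ[R] E) + ∑ k ∈ Finset.range n, Module.rank K (P k →ₗ[R] E) := by
  induction n with
  | zero => simp
  | succ n ih =>
    rw [rank_linearMap_eq_add_of_exact (hf n) (hfg n) (hg n), ih, Finset.sum_range_succ, add_assoc]

end HomIntoInjective

theorem exact_inclusion_submoduleComap_mkQ {R M : Type*} [Ring R] [AddCommGroup M] [Module R M]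
    (p : Submodule R M) (q : Submodule R (M ⧸ p)) :
    Function.Exact (Submodule.inclusion (p.le_comap_mkQ q)) (p.mkQ.submoduleComap q) := by
  rw [LinearMap.exact_iff, Submodule.range_inclusion]
  ext x
  simp [Subtype.ext_iff]

theorem rank_linearMap_loewySeries_eq_sum (K : Type*) [Ring K] [HasRankNullity.{max u v} K]
    (A : Type u) [Ring A] [Small.{v} A] (E : Type v) [AddCommGroup E] [Module A E] [Module K E]
    [SMulCommClass A K E] [Module.Injective A E] (n : ℕ) :
    Module.rank K (loewySeries A n →ₗ[A] E) =
      ∑ k ∈ Finset.range n, Module.rank K (socle A (A ⧸ loewySeries A k) →ₗ[A] E) := by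
  have := nontrivial_of_hasRankNullity.{max u v} K
  have : Subsingleton (loewySeries A 0) := inferInstanceAs (Subsingleton (⊥ : Submodule A A))
  rw [rank_linearMap_eq_add_sum_of_exact
      (fun k ↦ Submodule.inclusion ((loewySeries A k).le_comap_mkQ _))
      (fun k ↦ (loewySeries A k).mkQ.submoduleComap (socle A (A ⧸ loewySeries A k)))
      (fun _ ↦ Submodule.inclusion_injective _)
      (fun _ ↦ exact_inclusion_submoduleComap_mkQ _ _)
      (fun _ ↦ LinearMap.submoduleComap_surjective_of_surjective _ _ (Submodule.mkQ_surjective _)),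
    rank_subsingleton', zero_add]

theorem rank_eq_sum_rank_dual_loewy_factors_general (K : Type v) [Ring K] [HasRankNullity.{u} K]
    (A : Type u) [Ring A] (E : Type u) [AddCommGroup E] [Module A E] [Module K E]
    [SMulCommClass A K E] [Module.Injective A E] (n : ℕ) (hn : loewySeries A n = ⊤) :
    Module.rank K E =
      ∑ k ∈ Finset.range n, Module.rank K (socle A (A ⧸ loewySeries A k) →ₗ[A] E) :=
  calc
    Module.rank K E = Module.rank K (A →ₗ[A] E) :=
      (LinearMap.ringLmapEquivSelf A K E).rank_eq.symm
    _ = Module.rank K (loewySeries A n →ₗ[A] E) :=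
      ((LinearEquiv.ofTop _ hn).congrLeft E K).rank_eq.symm
    _ = _ := rank_linearMap_loewySeries_eq_sum K A E n

/-- Let `A` be a left self-injective semiprimary algebra over a field `K`, with left Loewy
series `0 = Σ₋₁ ⊂ Σ₀ ⊂ ⋯ ⊂ Σ_{n-1} = A` (so `Σₖ/Σₖ₋₁` is the socle of `A/Σₖ₋₁`, and
`loewySeries A n = ⊤`).  Then `dim_K A = ∑ₖ dim_K ((Σₖ/Σₖ₋₁)*)`, where `M* = Hom_A(M, A)`. -/
theorem rank_eq_sum_rank_dual_loewy_factors
    (K : Type v) [Field K] (A : Type u) [Ring A] [Algebra K A]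
    (hsp : IsSemiprimary A) (hinj : Module.Injective A A)
    (n : ℕ) (hn : loewySeries A n = ⊤) :
    Module.rank K A =
      ∑ k ∈ Finset.range n,
        Module.rank K ((socle A (A ⧸ loewySeries A k)) →ₗ[A] A) :=
  rank_eq_sum_rank_dual_loewy_factors_general K A A n hn
end
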